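/- Fix p ∈ (0,1) and μ ∈ ℝ with μ ≠ 0. For δ > 0 let g_δ be the Lebesgue density of the Gaussian mixture q_δ = p·N(μ,δ²) + (1−p)·N(0,δ²) on ℝ, and let H(q_δ) = −∫ g_δ(x)·log g_δ(x) dx be its differential entropy. Then lim_{δ→0⁺} [ H(q_δ) − (1/2)·log(2πe·δ²) ] = −p·log p − (1−p)·log(1−p). That is, as the component variances shrink to zero with distinct means, the mixture entropy equals the common Gaussian component entropy plus the binary entropy of the mixing weight, which is the key entropy asymptotic in the proof of Lemma 1. -/

import Mathlib

open MeasureTheory ProbabilityTheory Real Filter Topology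

/-- Lebesgue density of the two-component Gaussian mixture
`p·N(m, δ²) + (1−p)·N(0, δ²)` on `ℝ`. -/
noncomputable def mixturePDF (p m δ : ℝ) (x : ℝ) : ℝ :=
  p * gaussianPDFReal m (Real.toNNReal (δ ^ 2)) x
    + (1 - p) * gaussianPDFReal 0 (Real.toNNReal (δ ^ 2)) x

/-- The logarithm of the likelihood-ratio correction `w + (1 - w) r`, where `r` is the ratio of two
unit Gaussian densities whose means differ by `s`, evaluated at distance `z` from one mean. -/
noncomputable def logCorrection (w s z : ℝ) : ℝ :=
  Real.log (w + (1 - w) * Real.exp (z ^ 2 / 2 - (s + z) ^ 2 / 2))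

lemma continuous_logCorrection {w : ℝ} (hw0 : 0 < w) (hw1 : w < 1) (s : ℝ) :
    Continuous (logCorrection w s) := by
  unfold logCorrection
  refine Continuous.log (by fun_prop) fun z => ?_
  have : 0 < 1 - w := by linarith
  positivity

lemma abs_logCorrection_le {w : ℝ} (hw0 : 0 < w) (hw1 : w < 1) (s z : ℝ) :
    |logCorrection w s z| ≤ z ^ 2 / 2 - Real.log w := by
  have hw : 0 < 1 - w := by linarith
  have hlog : Real.log w < 0 := Real.log_neg hw0 hw1
  have hexp := Real.exp_pos (z ^ 2 / 2 - (s + z) ^ 2 / 2)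
  have hle : Real.exp (z ^ 2 / 2 - (s + z) ^ 2 / 2) ≤ Real.exp (z ^ 2 / 2) :=
    Real.exp_le_exp.2 (by nlinarith [sq_nonneg (s + z)])
  have hone : 1 ≤ Real.exp (z ^ 2 / 2) := Real.one_le_exp (by positivity)
  have hlower : Real.log w ≤ logCorrection w s z :=
    Real.log_le_log hw0 (by nlinarith [mul_pos hw hexp])
  have hupper : logCorrection w s z ≤ z ^ 2 / 2 := by
    rw [logCorrection, Real.log_le_iff_le_exp (by positivity)]
    nlinarith
  rw [abs_le]
  constructor <;> nlinarith [sq_nonneg z]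

lemma integrable_sq_gaussianReal : Integrable (fun z : ℝ => z ^ 2) (gaussianReal 0 1) :=
  (memLp_id_gaussianReal' 2 (by simp)).integrable_sq

lemma integral_sq_gaussianReal : ∫ z : ℝ, z ^ 2 ∂gaussianReal 0 1 = 1 := by
  have h := variance_fun_id_gaussianReal (μ := 0) (v := 1)
  rw [variance_eq_integral (by fun_prop)] at h
  simpa using h

lemma integrable_logCorrection {w : ℝ} (hw0 : 0 < w) (hw1 : w < 1) (s : ℝ) :
    Integrable (logCorrection w s) (gaussianReal 0 1) :=
  ((integrable_sq_gaussianReal.div_const 2).sub (integrable_const (Real.log w))).mono'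
    (continuous_logCorrection hw0 hw1 s).aestronglyMeasurable
    (Eventually.of_forall fun z => abs_logCorrection_le hw0 hw1 s z)

lemma tendsto_logCorrection {w d : ℝ} (hw0 : 0 < w) (hd : d ≠ 0) (z : ℝ) :
    Tendsto (fun δ : ℝ => logCorrection w (d / δ) z) (𝓝[>] 0) (𝓝 (Real.log w)) := by
  have habs : Tendsto (fun δ : ℝ => |d / δ + z|) (𝓝[>] 0) atTop := by
    have h : Tendsto (fun δ : ℝ => |d| * δ⁻¹ - |z|) (𝓝[>] 0) atTop :=
      tendsto_atTop_add_const_right _ _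
        (tendsto_inv_nhdsGT_zero.const_mul_atTop (abs_pos.2 hd))
    refine tendsto_atTop_mono' _ ?_ h
    filter_upwards [self_mem_nhdsWithin] with δ hδ
    have hδ : 0 < δ := hδ
    have := abs_sub_abs_le_abs_sub (d / δ) (-z)
    rwa [abs_neg, sub_neg_eq_add, abs_div, abs_of_pos hδ, div_eq_mul_inv] at this
  have hsq : Tendsto (fun δ : ℝ => (d / δ + z) ^ 2) (𝓝[>] 0) atTop := by
    simpa only [Function.comp_def, sq_abs] using (tendsto_pow_atTop two_ne_zero).comp habs
  have hexp : Tendsto (fun δ : ℝ => Real.exp (z ^ 2 / 2 - (d / δ + z) ^ 2 / 2)) (𝓝[>] 0) (𝓝 0) :=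
    Real.tendsto_exp_atBot.comp
      (tendsto_atBot_add_const_left _ _
        (tendsto_neg_atTop_atBot.comp (hsq.atTop_div_const two_pos)))
  have harg := (hexp.const_mul (1 - w)).const_add w
  rw [mul_zero, add_zero] at harg
  exact harg.log hw0.ne'

lemma tendsto_integral_logCorrection {w d : ℝ} (hw0 : 0 < w) (hw1 : w < 1) (hd : d ≠ 0) :
    Tendsto (fun δ : ℝ => ∫ z, logCorrection w (d / δ) z ∂gaussianReal 0 1)
      (𝓝[>] 0) (𝓝 (Real.log w)) := by
  have h := tendsto_integral_filter_of_dominated_convergence (μ := gaussianReal 0 1)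
    (l := 𝓝[>] (0 : ℝ)) (F := fun δ => logCorrection w (d / δ)) (f := fun _ => Real.log w)
    (fun z => z ^ 2 / 2 - Real.log w)
    (Eventually.of_forall fun δ =>
      (continuous_logCorrection hw0 hw1 (d / δ)).aestronglyMeasurable)
    (Eventually.of_forall fun δ => Eventually.of_forall fun z =>
      abs_logCorrection_le hw0 hw1 (d / δ) z)
    ((integrable_sq_gaussianReal.div_const 2).sub (integrable_const (Real.log w)))
    (Eventually.of_forall fun z => tendsto_logCorrection hw0 hd z)
  simpa using h

lemma log_mixture_eq {w δ : ℝ} (hw0 : 0 < w) (hw1 : w < 1) (hδ : 0 < δ) (m m' z : ℝ) :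
    Real.log (w * gaussianPDFReal m (Real.toNNReal (δ ^ 2)) (δ * z + m)
        + (1 - w) * gaussianPDFReal m' (Real.toNNReal (δ ^ 2)) (δ * z + m))
      = -(1 / 2) * Real.log (2 * π * δ ^ 2) - z ^ 2 / 2 + logCorrection w ((m - m') / δ) z := by
  have hw : 0 < 1 - w := by linarith
  have hv : ((Real.toNNReal (δ ^ 2) : NNReal) : ℝ) = δ ^ 2 := Real.coe_toNNReal _ (sq_nonneg δ)
  have hexp : Real.exp (-(δ * z + m - m') ^ 2 / (2 * δ ^ 2))
      = Real.exp (-(z ^ 2 / 2)) * Real.exp (z ^ 2 / 2 - ((m - m') / δ + z) ^ 2 / 2) := by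
    rw [← Real.exp_add]
    congr 1
    field_simp
    ring
  have hexp' : Real.exp (-(δ * z + m - m) ^ 2 / (2 * δ ^ 2)) = Real.exp (-(z ^ 2 / 2)) := by
    congr 1
    field_simp
    ring
  have hfactor : w * gaussianPDFReal m (Real.toNNReal (δ ^ 2)) (δ * z + m)
        + (1 - w) * gaussianPDFReal m' (Real.toNNReal (δ ^ 2)) (δ * z + m)
      = (√(2 * π * δ ^ 2))⁻¹ * Real.exp (-(z ^ 2 / 2))
        * (w + (1 - w) * Real.exp (z ^ 2 / 2 - ((m - m') / δ + z) ^ 2 / 2)) := by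
    simp only [gaussianPDFReal, hv, hexp, hexp']
    ring
  rw [hfactor, Real.log_mul (by positivity) (by positivity),
    Real.log_mul (by positivity) (by positivity), Real.log_inv, Real.log_sqrt (by positivity),
    Real.log_exp, logCorrection]
  ring

lemma gaussianReal_eq_map_standard (m δ : ℝ) :
    gaussianReal m (Real.toNNReal (δ ^ 2))
      = (gaussianReal 0 1).map (fun z => δ * z + m) := by
  have h : (fun z : ℝ => δ * z + m) = (fun z => z + m) ∘ (fun z => δ * z) := rfl
  rw [h, ← Measure.map_map (by fun_prop) (by fun_prop), gaussianReal_map_const_mul,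
    gaussianReal_map_add_const]
  congr 1
  · simp
  · ext
    simp [sq_nonneg]

lemma measurable_log_mixture (w m m' : ℝ) (v : NNReal) :
    Measurable fun x =>
      Real.log (w * gaussianPDFReal m v x + (1 - w) * gaussianPDFReal m' v x) :=
  (((measurable_gaussianPDFReal m v).const_mul w).add
    ((measurable_gaussianPDFReal m' v).const_mul (1 - w))).log

lemma integrable_gaussianPDFReal_mul_log {w δ : ℝ} (hw0 : 0 < w) (hw1 : w < 1) (hδ : 0 < δ)
    (m m' : ℝ) :
    Integrable fun x => gaussianPDFReal m (Real.toNNReal (δ ^ 2)) x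
      * Real.log (w * gaussianPDFReal m (Real.toNNReal (δ ^ 2)) x
        + (1 - w) * gaussianPDFReal m' (Real.toNNReal (δ ^ 2)) x) := by
  have hv : Real.toNNReal (δ ^ 2) ≠ 0 := (Real.toNNReal_pos.2 (by positivity)).ne'
  have h : Integrable (fun x => Real.log (w * gaussianPDFReal m (Real.toNNReal (δ ^ 2)) x
        + (1 - w) * gaussianPDFReal m' (Real.toNNReal (δ ^ 2)) x))
      (gaussianReal m (Real.toNNReal (δ ^ 2))) := by
    rw [gaussianReal_eq_map_standard, integrable_map_measure
      (measurable_log_mixture w m m' _).aestronglyMeasurable (by fun_prop)]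
    simp only [Function.comp_def, log_mixture_eq hw0 hw1 hδ]
    exact ((integrable_const _).sub (integrable_sq_gaussianReal.div_const 2)).add
      (integrable_logCorrection hw0 hw1 _)
  rw [gaussianReal_of_var_ne_zero m hv, integrable_withDensity_iff_integrable_smul'
    (measurable_gaussianPDF _ _) (Eventually.of_forall fun _ => gaussianPDF_lt_top)] at h
  simpa only [toReal_gaussianPDF, smul_eq_mul] using h

lemma integral_gaussianPDFReal_mul_log {w δ : ℝ} (hw0 : 0 < w) (hw1 : w < 1) (hδ : 0 < δ)
    (m m' : ℝ) :
    ∫ x, gaussianPDFReal m (Real.toNNReal (δ ^ 2)) x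
      * Real.log (w * gaussianPDFReal m (Real.toNNReal (δ ^ 2)) x
        + (1 - w) * gaussianPDFReal m' (Real.toNNReal (δ ^ 2)) x)
      = -(1 / 2) * Real.log (2 * π * Real.exp 1 * δ ^ 2)
        + ∫ z, logCorrection w ((m - m') / δ) z ∂gaussianReal 0 1 := by
  have hv : Real.toNNReal (δ ^ 2) ≠ 0 := (Real.toNNReal_pos.2 (by positivity)).ne'
  have hlog : Real.log (2 * π * Real.exp 1 * δ ^ 2) = Real.log (2 * π * δ ^ 2) + 1 := by
    rw [show 2 * π * Real.exp 1 * δ ^ 2 = 2 * π * δ ^ 2 * Real.exp 1 by ring,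
      Real.log_mul (by positivity) (by positivity), Real.log_exp]
  have h := integral_gaussianReal_eq_integral_smul (μ := m) hv
    (f := fun x => Real.log (w * gaussianPDFReal m (Real.toNNReal (δ ^ 2)) x
        + (1 - w) * gaussianPDFReal m' (Real.toNNReal (δ ^ 2)) x))
  simp only [smul_eq_mul] at h
  rw [← h, gaussianReal_eq_map_standard, integral_map (by fun_prop)
    (measurable_log_mixture w m m' _).aestronglyMeasurable]
  simp only [log_mixture_eq hw0 hw1 hδ]
  have hquad : Integrable (fun z : ℝ => -(1 / 2) * Real.log (2 * π * δ ^ 2) - z ^ 2 / 2)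
      (gaussianReal 0 1) :=
    (integrable_const _).sub (integrable_sq_gaussianReal.div_const 2)
  rw [integral_add hquad (integrable_logCorrection hw0 hw1 _),
    integral_sub (integrable_const _) (integrable_sq_gaussianReal.div_const 2),
    integral_div, integral_sq_gaussianReal, hlog]
  simp only [integral_const, probReal_univ, one_smul]
  ring

lemma neg_integral_mixture_mul_log {p δ : ℝ} (hp0 : 0 < p) (hp1 : p < 1) (hδ : 0 < δ) (m : ℝ) :
    (- ∫ x, mixturePDF p m δ x * Real.log (mixturePDF p m δ x))
        - (1 / 2) * Real.log (2 * π * Real.exp 1 * δ ^ 2)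
      = -p * (∫ z, logCorrection p (m / δ) z ∂gaussianReal 0 1)
        - (1 - p) * ∫ z, logCorrection (1 - p) (-m / δ) z ∂gaussianReal 0 1 := by
  have hq0 : 0 < 1 - p := by linarith
  have hq1 : 1 - p < 1 := by linarith
  have hsplit : ∀ x, mixturePDF p m δ x * Real.log (mixturePDF p m δ x)
      = p * (gaussianPDFReal m (Real.toNNReal (δ ^ 2)) x
          * Real.log (p * gaussianPDFReal m (Real.toNNReal (δ ^ 2)) x
            + (1 - p) * gaussianPDFReal 0 (Real.toNNReal (δ ^ 2)) x))
        + (1 - p) * (gaussianPDFReal 0 (Real.toNNReal (δ ^ 2)) x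
          * Real.log ((1 - p) * gaussianPDFReal 0 (Real.toNNReal (δ ^ 2)) x
            + (1 - (1 - p)) * gaussianPDFReal m (Real.toNNReal (δ ^ 2)) x)) := by
    intro x
    rw [sub_sub_cancel, add_comm ((1 - p) * _) (p * _), mixturePDF]
    ring
  simp only [hsplit]
  rw [integral_add ((integrable_gaussianPDFReal_mul_log hp0 hp1 hδ m 0).const_mul p)
      ((integrable_gaussianPDFReal_mul_log hq0 hq1 hδ 0 m).const_mul (1 - p)),
    integral_const_mul, integral_const_mul, integral_gaussianPDFReal_mul_log hp0 hp1 hδ,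
    integral_gaussianPDFReal_mul_log hq0 hq1 hδ, sub_zero, zero_sub]
  ring


/-- Entropy asymptotics for a small-variance Gaussian mixture: for `p ∈ (0,1)` and
`μ ≠ 0`, the differential entropy `H(q_δ)` of `q_δ = p·N(μ,δ²) + (1−p)·N(0,δ²)`
satisfies `lim_{δ→0⁺} [H(q_δ) − (1/2)·log(2πe·δ²)] = −p·log p − (1−p)·log(1−p)`. -/
theorem mixture_entropy_small_variance_limit (p μ : ℝ)
    (hp0 : 0 < p) (hp1 : p < 1) (hμ : μ ≠ 0) :
    Tendsto
      (fun δ : ℝ =>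
        (- ∫ x, mixturePDF p μ δ x * Real.log (mixturePDF p μ δ x))
          - (1 / 2) * Real.log (2 * π * Real.exp 1 * δ ^ 2))
      (𝓝[>] 0)
      (𝓝 (-p * Real.log p - (1 - p) * Real.log (1 - p))) := by
  have h := ((tendsto_integral_logCorrection hp0 hp1 hμ).const_mul (-p)).sub
    ((tendsto_integral_logCorrection (sub_pos.2 hp1) (by linarith)
      (neg_ne_zero.2 hμ)).const_mul (1 - p))
  refine h.congr' ?_
  filter_upwards [self_mem_nhdsWithin] with δ hδ
  exact (neg_integral_mixture_mul_log hp0 hp1 hδ μ).symm
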